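/- (Small gain lemma with uniqueness.) Let R be a behavior with input-value space 𝒰 and output-value space 𝒴, and S a behavior with input-value space 𝒴 and output-value space 𝒰. Suppose R and S have Cauchy gains γ₁, γ₂ ∈ 𝒦∞ and incremental limit gains κ₁, κ₂ ∈ 𝒦∞ respectively, and that γ₁(γ₂(r)) < r and κ₁(κ₂(r)) < r for all r > 0. Then there exist ū ∈ 𝒰 and ȳ ∈ 𝒴 such that every (ω,η) ∈ R ∩ S⁻¹ with ‖ω‖_aa < ∞ satisfies lim_{t→∞} ω(t) = ū and lim_{t→∞} η(t) = ȳ (assuming R ∩ S⁻¹ contains at least one such pair). -/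

import Mathlib

open Filter Topology MeasureTheory
open scoped ENNReal NNReal

noncomputable def aa {M : Type*} [PseudoMetricSpace M] (ω : ℝ → M) : ℝ≥0∞ :=
  Filter.limsup (fun p : ℝ × ℝ => edist (ω p.1) (ω p.2)) (Filter.atTop ×ˢ Filter.atTop)

def KInfty (γ : ℝ≥0 → ℝ≥0) : Prop :=
  Continuous γ ∧ StrictMono γ ∧ γ 0 = 0 ∧ Filter.Tendsto γ Filter.atTop Filter.atTop

noncomputable def extK (γ : ℝ≥0 → ℝ≥0) : ℝ≥0∞ → ℝ≥0∞ :=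
  fun x => if x = ⊤ then ⊤ else ↑(γ x.toNNReal)

def CauchyGain {U Y : Type*} [PseudoMetricSpace U] [PseudoMetricSpace Y]
    (R : Set ((ℝ → U) × (ℝ → Y))) (γ : ℝ≥0 → ℝ≥0) : Prop :=
  ∀ p ∈ R, aa p.2 ≤ extK γ (aa p.1)

def IncGain {U Y : Type*} [PseudoMetricSpace U] [PseudoMetricSpace Y]
    (R : Set ((ℝ → U) × (ℝ → Y))) (κ : ℝ≥0 → ℝ≥0) : Prop :=
  ∀ p₁ ∈ R, ∀ p₂ ∈ R, ∀ u₁ u₂ : U,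
    Filter.Tendsto p₁.1 Filter.atTop (nhds u₁) → Filter.Tendsto p₂.1 Filter.atTop (nhds u₂) →
    Filter.limsup (fun t => edist (p₁.2 t) (p₂.2 t)) Filter.atTop ≤ ↑(κ (nndist u₁ u₂))

def convTo {U : Type*} [PseudoMetricSpace U] (ω : ℝ → U) (U₀ : Set U) : Prop :=
  ∀ ε > 0, ∃ T : ℝ, 0 ≤ T ∧ ∀ t ≥ T, ∃ u' ∈ U₀, dist (ω t) u' ≤ ε

def omegaLim {U : Type*} [PseudoMetricSpace U] (ω : ℝ → U) : Set U :=
  {u | ∃ t : ℕ → ℝ, Filter.Tendsto t Filter.atTop Filter.atTop ∧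
       Filter.Tendsto (fun i => ω (t i)) Filter.atTop (nhds u)}

def Precomp {U : Type*} [TopologicalSpace U] (ω : ℝ → U) : Prop :=
  ∃ K : Set U, IsCompact K ∧ ∀ t : ℝ, 0 ≤ t → ω t ∈ K

def cascade {U Y Z : Type*} (R : Set ((ℝ → U) × (ℝ → Y))) (S : Set ((ℝ → Y) × (ℝ → Z))) :
    Set ((ℝ → U) × (ℝ → Z)) :=
  {p | ∃ η : ℝ → Y, (p.1, η) ∈ R ∧ (η, p.2) ∈ S}

def CauchyGainOn {U Y : Type*} [PseudoMetricSpace U] [PseudoMetricSpace Y]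
    (R : Set ((ℝ → U) × (ℝ → Y))) (γ : ℝ≥0 → ℝ≥0) (U₀ : Set U) : Prop :=
  ∀ p ∈ R, convTo p.1 U₀ → aa p.2 ≤ extK γ (aa p.1)

def IncGainOn {U Y : Type*} [PseudoMetricSpace U] [PseudoMetricSpace Y]
    (R : Set ((ℝ → U) × (ℝ → Y))) (κ : ℝ≥0 → ℝ≥0) (U₀ : Set U) : Prop :=
  ∀ p₁ ∈ R, ∀ p₂ ∈ R, ∀ u₁ u₂ : U, u₁ ∈ U₀ → u₂ ∈ U₀ →
    Filter.Tendsto p₁.1 Filter.atTop (nhds u₁) → Filter.Tendsto p₂.1 Filter.atTop (nhds u₂) →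
    Filter.limsup (fun t => edist (p₁.2 t) (p₂.2 t)) Filter.atTop ≤ ↑(κ (nndist u₁ u₂))

def ZV {E : Type*} (X : Set E) (V : E → ℝ) : Set E := {x ∈ X | V x = 0}

def UDecrease {E 𝒰 : Type*} [NormedAddCommGroup E] [NormedSpace ℝ E] [PseudoMetricSpace 𝒰]
    (X₀ X : Set E) (f : E → 𝒰 → E) (Uset : Set 𝒰) (V : E → ℝ) : Prop :=
  (∀ x ∈ X, 0 ≤ V x) ∧ ContinuousOn V X ∧
  (∀ a b : ℝ, 0 ≤ a → a ≤ b → IsCompact {x ∈ X | a ≤ V x ∧ V x ≤ b}) ∧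
  (∀ x ∈ X, V x ≠ 0 → ∃ (W : Set E) (Vt : E → ℝ), IsOpen W ∧ x ∈ W ∧ W ⊆ X₀ ∧
    ContDiffOn ℝ 1 Vt W ∧ (∀ z ∈ W ∩ X, Vt z = V z) ∧
    ∀ u ∈ Uset, fderiv ℝ Vt x (f x u) < 0)

/-!
Composing the two Cauchy gains around the loop gives `‖η‖_aa ≤ γ₁ (γ₂ ‖η‖_aa)`, which for a finite
amplitude forces `‖η‖_aa = 0` and then `‖ω‖_aa ≤ γ₂ 0 = 0`. Hence both signals are Cauchy and
converge. The incremental limit gains give the same pair of inequalities for the distances between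
the limits of two pairs in the interconnection, so these distances vanish as well.
-/

theorem eq_zero_and_eq_zero_of_small_gain {α β : Type*} [PartialOrder α] [Zero α]
    [IsBotZeroClass α] [PartialOrder β] [Zero β] [IsBotZeroClass β] {f : α → β} {g : β → α}
    (hf : Monotone f) (hg : g 0 = 0) (hfg : ∀ r, 0 < r → f (g r) < r)
    {a : α} {b : β} (ha : a ≤ g b) (hb : b ≤ f a) : a = 0 ∧ b = 0 := by
  have hb₀ : b = 0 := by
    by_contra hne
    exact (hb.trans (hf ha)).not_gt (hfg b (pos_iff_ne_zero.mpr hne))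
  subst hb₀
  exact ⟨nonpos_iff_eq_zero.mp (ha.trans_eq hg), rfl⟩

theorem extK_coe (γ : ℝ≥0 → ℝ≥0) (r : ℝ≥0) : extK γ r = γ r := by
  simp [extK]

section Amplitude

variable {M : Type*} [PseudoMetricSpace M] {ω : ℝ → M}

theorem aa_eq_zero_iff_cauchy_map : aa ω = 0 ↔ Cauchy (map ω atTop) := by
  rw [cauchy_map_iff', uniformity_basis_edist.tendsto_right_iff, ← nonpos_iff_eq_zero, aa,
    limsup_le_iff]
  simp only [gt_iff_lt, Set.mem_ofPred_eq]

theorem exists_tendsto_of_aa_eq_zero [CompleteSpace M] (h : aa ω = 0) :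
    ∃ x, Tendsto ω atTop (𝓝 x) :=
  cauchy_map_iff_exists_tendsto.mp (aa_eq_zero_iff_cauchy_map.mp h)

end Amplitude

section Feedback

variable {U Y : Type*} [PseudoMetricSpace U] [PseudoMetricSpace Y]
  {R : Set ((ℝ → U) × (ℝ → Y))} {S : Set ((ℝ → Y) × (ℝ → U))} {γ₁ γ₂ κ κ₁ κ₂ : ℝ≥0 → ℝ≥0}

theorem CauchyGain.aa_eq_zero_of_feedback (hR : CauchyGain R γ₁) (hS : CauchyGain S γ₂)
    (hγ₁ : Monotone γ₁) (hγ₂ : γ₂ 0 = 0) (hγ : ∀ r, 0 < r → γ₁ (γ₂ r) < r)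
    {ω : ℝ → U} {η : ℝ → Y} (hωη : (ω, η) ∈ R) (hηω : (η, ω) ∈ S) (hω : aa ω < ⊤) :
    aa ω = 0 ∧ aa η = 0 := by
  have hη_le : aa η ≤ extK γ₁ (aa ω) := hR (ω, η) hωη
  have hω_le : aa ω ≤ extK γ₂ (aa η) := hS (η, ω) hηω
  lift aa ω to ℝ≥0 using hω.ne with a
  rw [extK_coe] at hη_le
  lift aa η to ℝ≥0 using ne_top_of_le_ne_top ENNReal.coe_ne_top hη_le with b
  rw [extK_coe] at hω_le
  norm_cast at hη_le hω_le ⊢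
  exact eq_zero_and_eq_zero_of_small_gain hγ₁ hγ₂ hγ hω_le hη_le

theorem CauchyGain.exists_tendsto_of_feedback [CompleteSpace U] [CompleteSpace Y]
    (hR : CauchyGain R γ₁) (hS : CauchyGain S γ₂)
    (hγ₁ : Monotone γ₁) (hγ₂ : γ₂ 0 = 0) (hγ : ∀ r, 0 < r → γ₁ (γ₂ r) < r)
    {ω : ℝ → U} {η : ℝ → Y} (hωη : (ω, η) ∈ R) (hηω : (η, ω) ∈ S) (hω : aa ω < ⊤) :
    ∃ u y, Tendsto ω atTop (𝓝 u) ∧ Tendsto η atTop (𝓝 y) := by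
  obtain ⟨hω₀, hη₀⟩ := hR.aa_eq_zero_of_feedback hS hγ₁ hγ₂ hγ hωη hηω hω
  obtain ⟨u, hu⟩ := exists_tendsto_of_aa_eq_zero hω₀
  obtain ⟨y, hy⟩ := exists_tendsto_of_aa_eq_zero hη₀
  exact ⟨u, y, hu, hy⟩

theorem IncGain.nndist_le (hR : IncGain R κ) {ω₁ ω₂ : ℝ → U} {η₁ η₂ : ℝ → Y}
    (h₁ : (ω₁, η₁) ∈ R) (h₂ : (ω₂, η₂) ∈ R) {u₁ u₂ : U} {y₁ y₂ : Y}
    (hω₁ : Tendsto ω₁ atTop (𝓝 u₁)) (hω₂ : Tendsto ω₂ atTop (𝓝 u₂))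
    (hη₁ : Tendsto η₁ atTop (𝓝 y₁)) (hη₂ : Tendsto η₂ atTop (𝓝 y₂)) :
    nndist y₁ y₂ ≤ κ (nndist u₁ u₂) := by
  have h := hR _ h₁ _ h₂ u₁ u₂ hω₁ hω₂
  rw [(hη₁.edist hη₂).limsup_eq, edist_nndist] at h
  exact_mod_cast h

theorem IncGain.inseparable_of_feedback (hR : IncGain R κ₁) (hS : IncGain S κ₂)
    (hκ₁ : Monotone κ₁) (hκ₂ : κ₂ 0 = 0) (hκ : ∀ r, 0 < r → κ₁ (κ₂ r) < r)
    {ω₁ ω₂ : ℝ → U} {η₁ η₂ : ℝ → Y} (hR₁ : (ω₁, η₁) ∈ R) (hS₁ : (η₁, ω₁) ∈ S)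
    (hR₂ : (ω₂, η₂) ∈ R) (hS₂ : (η₂, ω₂) ∈ S) {u₁ u₂ : U} {y₁ y₂ : Y}
    (hω₁ : Tendsto ω₁ atTop (𝓝 u₁)) (hω₂ : Tendsto ω₂ atTop (𝓝 u₂))
    (hη₁ : Tendsto η₁ atTop (𝓝 y₁)) (hη₂ : Tendsto η₂ atTop (𝓝 y₂)) :
    Inseparable u₁ u₂ ∧ Inseparable y₁ y₂ := by
  rw [Metric.inseparable_iff_nndist, Metric.inseparable_iff_nndist]
  exact eq_zero_and_eq_zero_of_small_gain hκ₁ hκ₂ hκ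
    (hS.nndist_le hS₁ hS₂ hη₁ hη₂ hω₁ hω₂) (hR.nndist_le hR₁ hR₂ hω₁ hω₂ hη₁ hη₂)

theorem stmt3_general [CompleteSpace U] [CompleteSpace Y]
    (hγ₁ : Monotone γ₁) (hγ₂ : γ₂ 0 = 0) (hκ₁ : Monotone κ₁) (hκ₂ : κ₂ 0 = 0)
    (hR : CauchyGain R γ₁) (hS : CauchyGain S γ₂) (hRi : IncGain R κ₁) (hSi : IncGain S κ₂)
    (hγ : ∀ r, 0 < r → γ₁ (γ₂ r) < r) (hκ : ∀ r, 0 < r → κ₁ (κ₂ r) < r)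
    (hne : ∃ ω η, (ω, η) ∈ R ∧ (η, ω) ∈ S ∧ aa ω < ⊤) :
    ∃ u y, ∀ ω η, (ω, η) ∈ R → (η, ω) ∈ S → aa ω < ⊤ →
      Tendsto ω atTop (𝓝 u) ∧ Tendsto η atTop (𝓝 y) := by
  obtain ⟨ω₀, η₀, hR₀, hS₀, hω₀⟩ := hne
  obtain ⟨u₀, y₀, hu₀, hy₀⟩ := hR.exists_tendsto_of_feedback hS hγ₁ hγ₂ hγ hR₀ hS₀ hω₀
  refine ⟨u₀, y₀, fun ω η hωη hηω hω => ?_⟩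
  obtain ⟨u, y, hu, hy⟩ := hR.exists_tendsto_of_feedback hS hγ₁ hγ₂ hγ hωη hηω hω
  obtain ⟨huu₀, hyy₀⟩ :=
    hRi.inseparable_of_feedback hSi hκ₁ hκ₂ hκ hωη hηω hR₀ hS₀ hu hu₀ hy hy₀
  exact ⟨huu₀.nhds_eq ▸ hu, hyy₀.nhds_eq ▸ hy⟩

end Feedback

/-- Small gain lemma with uniqueness. -/
theorem stmt3 {𝒰 𝒴 : Type*} [MetricSpace 𝒰] [CompleteSpace 𝒰] [MetricSpace 𝒴] [CompleteSpace 𝒴]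
    (R : Set ((ℝ → 𝒰) × (ℝ → 𝒴))) (S : Set ((ℝ → 𝒴) × (ℝ → 𝒰)))
    (γ₁ γ₂ κ₁ κ₂ : ℝ≥0 → ℝ≥0)
    (hγ₁ : KInfty γ₁) (hγ₂ : KInfty γ₂) (hκ₁ : KInfty κ₁) (hκ₂ : KInfty κ₂)
    (hR : CauchyGain R γ₁) (hS : CauchyGain S γ₂)
    (hRi : IncGain R κ₁) (hSi : IncGain S κ₂)
    (hsg : ∀ r : ℝ≥0, 0 < r → γ₁ (γ₂ r) < r)
    (hsk : ∀ r : ℝ≥0, 0 < r → κ₁ (κ₂ r) < r)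
    (hne : ∃ ω : ℝ → 𝒰, ∃ η : ℝ → 𝒴, (ω, η) ∈ R ∧ (η, ω) ∈ S ∧ aa ω < ⊤) :
    ∃ (ubar : 𝒰) (ybar : 𝒴), ∀ ω : ℝ → 𝒰, ∀ η : ℝ → 𝒴,
      (ω, η) ∈ R → (η, ω) ∈ S → aa ω < ⊤ →
      Filter.Tendsto ω Filter.atTop (nhds ubar) ∧ Filter.Tendsto η Filter.atTop (nhds ybar) :=
  stmt3_general hγ₁.2.1.monotone hγ₂.2.2.1 hκ₁.2.1.monotone hκ₂.2.2.1 hR hS hRi hSi hsg hsk hne
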